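/- There exists a function h: ℕ → ℕ (one may take h(r) = r·g(r) + r with g(r) = 1 + 2^{2^{r(r−1)/2}}) such that for every median algebra M of rank at most r and every subset A ⊆ M, the median subalgebra generated by A satisfies ⟨A⟩ = ℳ^{h(r)}(A). -/

import Mathlib

/-- A median algebra: a set with a ternary median operation satisfying the
standard axioms. -/
structure MedianAlgebra (X : Type*) where
  med : X → X → X → X
  absorb : ∀ a b, med a a b = a
  rot : ∀ a b c, med a b c = med b c a
  swap : ∀ a b c, med a b c = med b a c
  assoc : ∀ a x b c, med (med a x b) x c = med a x (med b x c)

/-- A subset `C` is convex for the median operation `med` if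
`med(C × C × X) ⊆ C`. -/
def IsConvexSet {X : Type*} (med : X → X → X → X) (C : Set X) : Prop :=
  ∀ a ∈ C, ∀ b ∈ C, ∀ x : X, med a b x ∈ C

/-- A halfspace: a subset such that both it and its complement are nonempty
and convex. -/
def IsHalfspace {X : Type*} (med : X → X → X → X) (h : Set X) : Prop :=
  h.Nonempty ∧ hᶜ.Nonempty ∧ IsConvexSet med h ∧ IsConvexSet med hᶜ

/-- Two halfspaces (equivalently, the walls they bound) are transverse if all
four pairwise intersections of associated halfspaces are nonempty. -/
def Transverse {X : Type*} (h k : Set X) : Prop :=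
  (h ∩ k).Nonempty ∧ (h ∩ kᶜ).Nonempty ∧ (hᶜ ∩ k).Nonempty ∧ (hᶜ ∩ kᶜ).Nonempty

/-- The median algebra has rank at most `r`: any collection of pairwise
transverse (distinct) halfspaces has cardinality at most `r`. -/
def RankLE {X : Type*} (med : X → X → X → X) (r : ℕ) : Prop :=
  ∀ H : Finset (Set X), (∀ h ∈ H, IsHalfspace med h) →
    (∀ h ∈ H, ∀ k ∈ H, h ≠ k → Transverse h k) → H.card ≤ r

/-- Rank 1: no two halfspaces are transverse. -/
def Rank1 {X : Type*} (M : MedianAlgebra X) : Prop :=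
  ∀ h k : Set X, IsHalfspace M.med h → IsHalfspace M.med k → ¬ Transverse h k

/-- The operator `ℳ(A) = med(A × A × A)`. -/
def MSet {X : Type*} (med : X → X → X → X) (A : Set X) : Set X :=
  {p | ∃ a ∈ A, ∃ b ∈ A, ∃ c ∈ A, med a b c = p}

/-- The median subalgebra generated by `A`: the smallest subset containing `A`
and closed under the median operation. -/
def medSpan {X : Type*} (med : X → X → X → X) (A : Set X) : Set X :=
  ⋂₀ {S : Set X | A ⊆ S ∧ ∀ a ∈ S, ∀ b ∈ S, ∀ c ∈ S, med a b c ∈ S}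

/-- The coordinatewise median operation on a product. -/
def prodMed {X Y : Type*} (m₁ : X → X → X → X) (m₂ : Y → Y → Y → Y) :
    X × Y → X × Y → X × Y → X × Y :=
  fun p q r => (m₁ p.1 q.1 r.1, m₂ p.2 q.2 r.2)

/-!
Points of a median algebra are separated by halfspaces (Zorn), and a halfspace contains `m(a, b, c)`
exactly when it contains two of `a, b, c`. Iterating `a, e ↦ m(x, a, e)` from `y` over a finite
list `l` therefore gives the point of the interval `I(x, y)` that lies in a halfspace separating `y`
from `x` iff all of `l` does: a meet in the distributive lattice `I(x, y)`. In an irredundant list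
every entry is left out by a halfspace containing the other entries and separating `y` from `x`;
these halfspaces are pairwise transverse, so in rank `r` every meet is a meet of at most `r` points.

By disjunctive normal form, a point of `⟨S⟩ ∩ I(x, y)` with `x, y ∈ S` is a join of meets of points
of `S`, hence lies in `ℳ^{2r}(S)`. Finally a point `p` of `⟨A⟩` lies in the convex hull of a finite
subset of `A`, so it is reached from any `y ∈ A` as a meet in `I(p, y)` of at most `r` points of
`A`; each of the `r` partial meets lies in the interval between its predecessor and a point of `A`,
at a cost of `2r` applications of `ℳ`, which makes `2r²` in total.
-/

namespace MedianAlgebra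

variable {X : Type*} {M : MedianAlgebra X}

theorem swap_right (M : MedianAlgebra X) (a b c : X) : M.med a b c = M.med a c b := by
  rw [M.rot, M.swap, ← M.rot]

/-- The interval `I(a, b)` of points between `a` and `b`. -/
def interval (M : MedianAlgebra X) (a b : X) : Set X := {z | M.med a b z = z}

theorem mem_interval_iff {a b z : X} : z ∈ M.interval a b ↔ M.med z a b = z := by
  rw [M.rot]
  exact Iff.rfl

theorem interval_comm (M : MedianAlgebra X) (a b : X) : M.interval a b = M.interval b a := by
  simp only [interval, M.swap a b]

theorem mem_interval_symm {a b z : X} (hz : z ∈ M.interval a b) : z ∈ M.interval b a :=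
  M.interval_comm a b ▸ hz

theorem left_mem_interval (a b : X) : a ∈ M.interval a b :=
  (M.swap_right a b a).trans (M.absorb a b)

theorem right_mem_interval (a b : X) : b ∈ M.interval a b :=
  mem_interval_symm (left_mem_interval b a)

theorem med_mem_interval_left_mid (a b c : X) : M.med a b c ∈ M.interval a b := by
  change M.med a b (M.med a b c) = M.med a b c
  rw [← M.assoc, M.swap_right a b a, M.absorb]

theorem med_mem_interval_left_right (a b c : X) : M.med a b c ∈ M.interval a c :=
  M.swap_right a b c ▸ med_mem_interval_left_mid a c b

theorem med_mem_interval_mid_right (a b c : X) : M.med a b c ∈ M.interval b c :=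
  M.rot a b c ▸ med_mem_interval_left_mid b c a

theorem interval_subset_interval {a b c : X} (hb : b ∈ M.interval a c) :
    M.interval a b ⊆ M.interval a c := by
  intro z hz
  rw [mem_interval_iff] at hb hz ⊢
  calc M.med z a c = M.med (M.med z a b) a c := by rw [hz]
    _ = M.med z a (M.med b a c) := M.assoc z a b c
    _ = z := by rw [hb, hz]

theorem mem_interval_of_mem_interval {a b c z : X} (hz : z ∈ M.interval a b)
    (hb : b ∈ M.interval a c) : b ∈ M.interval z c := by
  have hz : M.med z b a = z := mem_interval_iff.1 (mem_interval_symm hz)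
  have hb : M.med a b c = b := (M.swap_right a b c).trans hb
  calc M.med z c b = M.med (M.med z b a) b c := by rw [hz, M.swap_right]
    _ = M.med z b (M.med a b c) := M.assoc z b a c
    _ = M.med z b b := by rw [hb]
    _ = b := right_mem_interval z b

theorem mem_interval_med {a b c z : X} (hb : z ∈ M.interval a b) (hc : z ∈ M.interval a c) :
    z ∈ M.interval a (M.med a b c) := by
  rw [mem_interval_iff] at hb hc ⊢
  rw [M.swap a b c, ← M.assoc, hb, hc]

theorem eq_of_mem_interval_self {a z : X} (hz : z ∈ M.interval a a) : z = a :=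
  Eq.trans (Eq.symm hz) (M.absorb a z)

theorem eq_of_mem_interval_of_mem_interval {a b c : X} (ha : a ∈ M.interval b c)
    (hb : b ∈ M.interval a c) : a = b :=
  calc a = M.med a b c := (mem_interval_iff.1 ha).symm
    _ = M.med a c b := M.swap_right a b c
    _ = b := hb

theorem eq_med {a b c z : X} (hab : z ∈ M.interval a b) (hbc : z ∈ M.interval b c)
    (hac : z ∈ M.interval a c) : z = M.med a b c := by
  have ha : z ∈ M.interval a (M.med a b c) := mem_interval_med hab hac
  have hb : z ∈ M.interval b (M.med a b c) := by
    rw [M.swap]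
    exact mem_interval_med (mem_interval_symm hab) hbc
  have hm : M.med a b c ∈ M.interval z a :=
    mem_interval_of_mem_interval hb (mem_interval_symm (med_mem_interval_left_mid a b c))
  exact eq_of_mem_interval_of_mem_interval (mem_interval_symm ha) hm

theorem med_mem_interval_of_mem_interval {a b u : X} (hu : u ∈ M.interval a b) (z : X) :
    M.med a b z ∈ M.interval z u := by
  -- `v ∈ I(z, u)` by construction, and `v` is the median of `a, b, z` because it lies between each
  -- two of them.
  set a' := M.med z u a
  set b' := M.med z u b
  set v := M.med z a' b'
  have hva' : v ∈ M.interval z a' := med_mem_interval_left_mid z a' b'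
  have hva : v ∈ M.interval z a :=
    interval_subset_interval (med_mem_interval_left_right z u a) hva'
  have hvb : v ∈ M.interval z b :=
    interval_subset_interval (med_mem_interval_left_right z u b)
      (med_mem_interval_left_right z a' b')
  have hvab : v ∈ M.interval a b := by
    have hb'u : b' ∈ M.interval b u := mem_interval_symm (med_mem_interval_mid_right z u b)
    have hb' : b' ∈ M.interval a b :=
      mem_interval_symm (interval_subset_interval (mem_interval_symm hu) hb'u)
    have hub' : u ∈ M.interval a b' :=
      mem_interval_symm (mem_interval_of_mem_interval hb'u (mem_interval_symm hu))
    have ha' : a' ∈ M.interval a b' :=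
      interval_subset_interval hub' (mem_interval_symm (med_mem_interval_mid_right z u a))
    have hvb' : v ∈ M.interval a b' :=
      mem_interval_symm (interval_subset_interval (mem_interval_symm ha')
        (mem_interval_symm (med_mem_interval_mid_right z a' b')))
    exact interval_subset_interval hb' hvb'
  rw [← eq_med hvab (mem_interval_symm hvb) (mem_interval_symm hva)]
  exact interval_subset_interval (med_mem_interval_left_mid z u a) hva'

theorem mem_interval_of_mem_endpoints {a b u w z : X} (ha : w ∈ M.interval z a)
    (hb : w ∈ M.interval z b) (hu : u ∈ M.interval a b) : w ∈ M.interval z u := by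
  refine interval_subset_interval (med_mem_interval_of_mem_interval hu z) ?_
  rw [← M.rot]
  exact mem_interval_med ha hb

section Convex

variable {C : Set X}

theorem _root_.IsConvexSet.interval_subset (hC : IsConvexSet M.med C) {a b : X} (ha : a ∈ C)
    (hb : b ∈ C) : M.interval a b ⊆ C :=
  fun z hz => hz ▸ hC a ha b hb z

theorem _root_.IsConvexSet.med_mem (hC : IsConvexSet M.med C) {a b c : X}
    (h : (a ∈ C ∧ b ∈ C) ∨ (b ∈ C ∧ c ∈ C) ∨ (a ∈ C ∧ c ∈ C)) : M.med a b c ∈ C := by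
  rcases h with ⟨ha, hb⟩ | ⟨hb, hc⟩ | ⟨ha, hc⟩
  · exact hC a ha b hb c
  · exact hC.interval_subset hb hc (med_mem_interval_mid_right a b c)
  · exact hC.interval_subset ha hc (med_mem_interval_left_right a b c)

theorem isConvexSet_singleton (M : MedianAlgebra X) (a : X) : IsConvexSet M.med {a} := by
  rintro _ rfl _ rfl z
  exact M.absorb _ z

theorem _root_.IsConvexSet.iUnion_interval (hC : IsConvexSet M.med C) (a : X) :
    IsConvexSet M.med (⋃ c ∈ C, M.interval a c) := by
  intro x hx y hy z
  simp only [Set.mem_iUnion, exists_prop] at hx hy ⊢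
  obtain ⟨c, hcC, hxc⟩ := hx
  obtain ⟨d, hdC, hyd⟩ := hy
  set w := M.med x y z
  set e := M.med c d w
  refine ⟨e, hC c hcC d hdC w, ?_⟩
  set v := M.med w a e
  have hva : v ∈ M.interval w a := med_mem_interval_left_mid w a e
  have hve : v ∈ M.interval w e := med_mem_interval_left_right w a e
  have hvc : v ∈ M.interval w c :=
    interval_subset_interval (mem_interval_symm (med_mem_interval_left_right c d w)) hve
  have hvd : v ∈ M.interval w d :=
    interval_subset_interval (mem_interval_symm (med_mem_interval_mid_right c d w)) hve
  have hvw : v ∈ M.interval w w :=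
    mem_interval_of_mem_endpoints (mem_interval_of_mem_endpoints hva hvc hxc)
      (mem_interval_of_mem_endpoints hva hvd hyd) (med_mem_interval_left_mid x y z)
  exact mem_interval_iff.2 (eq_of_mem_interval_self hvw)

theorem isConvexSet_sUnion_of_isChain {c : Set (Set X)} (hc : IsChain (· ⊆ ·) c)
    (hconv : ∀ C ∈ c, IsConvexSet M.med C) : IsConvexSet M.med (⋃₀ c) := by
  rintro x ⟨C, hC, hx⟩ y ⟨D, hD, hy⟩ z
  rcases hc.total hC hD with hCD | hDC
  · exact ⟨D, hD, hconv D hD x (hCD hx) y hy z⟩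
  · exact ⟨C, hC, hconv C hC x hx y (hDC hy) z⟩

theorem _root_.IsConvexSet.exists_maximal_notMem {p : X} (hC : IsConvexSet M.med C) (hp : p ∉ C) :
    ∃ D, C ⊆ D ∧ Maximal (fun D => IsConvexSet M.med D ∧ p ∉ D) D := by
  refine zorn_subset_nonempty {D | IsConvexSet M.med D ∧ p ∉ D} (fun c hc hchain _ => ?_) C ⟨hC, hp⟩
  refine ⟨⋃₀ c, ⟨isConvexSet_sUnion_of_isChain hchain fun D hD => (hc hD).1, ?_⟩,
    fun D hD => Set.subset_sUnion_of_mem hD⟩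
  rintro ⟨D, hD, hpD⟩
  exact (hc hD).2 hpD

theorem isConvexSet_compl_of_maximal {p : X}
    (hC : Maximal (fun D => IsConvexSet M.med D ∧ p ∉ D) C) (hne : C.Nonempty) :
    IsConvexSet M.med Cᶜ := by
  obtain ⟨⟨hconv, hp⟩, hmax⟩ := hC
  have exists_mem_interval : ∀ x ∉ C, ∃ c ∈ C, p ∈ M.interval x c := by
    intro x hx
    by_contra! hpx
    obtain ⟨a, ha⟩ := hne
    refine hx (hmax ⟨hconv.iUnion_interval x, by simpa using hpx⟩ ?_
      (Set.mem_biUnion ha (left_mem_interval x a)))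
    exact fun c hc => Set.mem_biUnion hc (right_mem_interval x c)
  intro x hx y hy z hzC
  obtain ⟨c, hc, hpc⟩ := exists_mem_interval x hx
  obtain ⟨d, hd, hpd⟩ := exists_mem_interval y hy
  set q := M.med c d p
  have hqC : q ∈ C := hconv c hc d hd p
  have hpx : p ∈ M.interval q x :=
    mem_interval_of_mem_interval (med_mem_interval_left_right c d p) (mem_interval_symm hpc)
  have hpy : p ∈ M.interval q y :=
    mem_interval_of_mem_interval (med_mem_interval_mid_right c d p) (mem_interval_symm hpd)
  have hpz : p ∈ M.interval q (M.med x y z) :=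
    mem_interval_of_mem_endpoints hpx hpy (med_mem_interval_left_mid x y z)
  exact hp (hconv.interval_subset hqC hzC hpz)

end Convex

section Halfspace

variable {h : Set X}

theorem exists_isHalfspace_of_ne (M : MedianAlgebra X) {a p : X} (hne : a ≠ p) :
    ∃ h, IsHalfspace M.med h ∧ a ∈ h ∧ p ∉ h := by
  obtain ⟨h, hah, hmax⟩ := (M.isConvexSet_singleton a).exists_maximal_notMem hne.symm
  have ha : a ∈ h := hah rfl
  exact ⟨h, ⟨⟨a, ha⟩, ⟨p, hmax.prop.2⟩, hmax.prop.1, isConvexSet_compl_of_maximal hmax ⟨a, ha⟩⟩,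
    ha, hmax.prop.2⟩

theorem _root_.IsHalfspace.compl (hh : IsHalfspace M.med h) : IsHalfspace M.med hᶜ :=
  ⟨hh.2.1, (compl_compl h).symm ▸ hh.1, hh.2.2.2, (compl_compl h).symm ▸ hh.2.2.1⟩

theorem _root_.IsHalfspace.med_mem_iff (hh : IsHalfspace M.med h) {a b c : X} :
    M.med a b c ∈ h ↔ (a ∈ h ∧ b ∈ h) ∨ (b ∈ h ∧ c ∈ h) ∨ (a ∈ h ∧ c ∈ h) := by
  refine ⟨fun hmed => ?_, hh.2.2.1.med_mem⟩
  by_contra hnot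
  refine hh.2.2.2.med_mem ?_ hmed
  simp only [Set.mem_compl_iff]
  tauto

/-- The halfspaces containing `y` but not `x`, often written `ℋ(x|y)`. -/
def halfspacesBetween (M : MedianAlgebra X) (x y : X) : Set (Set X) :=
  {h | IsHalfspace M.med h ∧ x ∉ h ∧ y ∈ h}

theorem compl_mem_halfspacesBetween {x y : X} (hh : h ∈ M.halfspacesBetween x y) :
    hᶜ ∈ M.halfspacesBetween y x :=
  ⟨hh.1.compl, not_not_intro hh.2.2, hh.2.1⟩

theorem eq_of_forall_mem_halfspacesBetween {x y z w : X} (hz : z ∈ M.interval x y)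
    (hw : w ∈ M.interval x y) (hzw : ∀ h ∈ M.halfspacesBetween x y, z ∈ h ↔ w ∈ h) : z = w := by
  by_contra hne
  obtain ⟨h, hh, hzh, hwh⟩ := M.exists_isHalfspace_of_ne hne
  by_cases hx : x ∈ h <;> by_cases hy : y ∈ h
  · exact hwh (hh.2.2.1.interval_subset hx hy hw)
  · exact (hzw hᶜ ⟨hh.compl, not_not_intro hx, hy⟩).2 hwh hzh
  · exact hwh ((hzw h ⟨hh, hx, hy⟩).1 hzh)
  · exact hh.2.2.2.interval_subset hx hy hz hzh

end Halfspace

section Meet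

/-- The meet of the points of `l`, projected to `I(x, y)` by `a ↦ m(x, y, a)`, in the distributive
lattice `I(x, y)` with bottom `x` and top `y`; equivalently, the gate of `x` in the convex hull of
`y` and `l`. The join is `M.meet y x l`. -/
def meet (M : MedianAlgebra X) (x y : X) (l : List X) : X := l.foldr (M.med x) y

theorem meet_mem_interval (x y : X) (l : List X) : M.meet x y l ∈ M.interval x y := by
  induction l with
  | nil => exact right_mem_interval x y
  | cons a l ih => exact interval_subset_interval ih (med_mem_interval_left_right x a _)

theorem meet_mem_iff {x y : X} {h : Set X} (hh : h ∈ M.halfspacesBetween x y) {l : List X} :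
    M.meet x y l ∈ h ↔ ∀ a ∈ l, a ∈ h := by
  induction l with
  | nil => simpa [meet] using hh.2.2
  | cons a l ih =>
    rw [List.forall_mem_cons, ← ih]
    change M.med x a (M.meet x y l) ∈ h ↔ _
    simp only [hh.1.med_mem_iff, hh.2.1, false_and, or_false, false_or]

theorem card_le_of_forall_exists_halfspace {r : ℕ} (hr : RankLE M.med r) {x y : X} {F : Finset X}
    (hF : ∀ a ∈ F, ∃ h ∈ M.halfspacesBetween x y, a ∉ h ∧ ∀ b ∈ F, b ≠ a → b ∈ h) :
    F.card ≤ r := by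
  classical
  choose! k hk hak hbk using hF
  have hinj : Set.InjOn k F := by
    intro a ha b hb hab
    by_contra hne
    exact hak a ha (hab ▸ hbk b hb a ha hne)
  rw [← Finset.card_image_of_injOn hinj]
  refine hr _ (Finset.forall_mem_image.2 fun a ha => (hk a ha).1) ?_
  simp only [Finset.forall_mem_image]
  intro a ha b hb hne
  have hab : a ≠ b := fun hab => hne (congrArg k hab)
  exact ⟨⟨y, (hk a ha).2.2, (hk b hb).2.2⟩, ⟨b, hbk a ha b hb hab.symm, hak b hb⟩,
    ⟨a, hak a ha, hbk b hb a ha hab⟩, ⟨x, (hk a ha).2.1, (hk b hb).2.1⟩⟩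

theorem exists_subset_card_le_of_rankLE {r : ℕ} (hr : RankLE M.med r) (x y : X) (F : Finset X) :
    ∃ G ⊆ F, G.card ≤ r ∧
      ∀ h ∈ M.halfspacesBetween x y, (∀ a ∈ G, a ∈ h) → ∀ a ∈ F, a ∈ h := by
  classical
  induction F using Finset.strongInduction with
  | H F ih =>
    by_cases hF : ∀ a ∈ F, ∃ h ∈ M.halfspacesBetween x y, a ∉ h ∧ ∀ b ∈ F, b ≠ a → b ∈ h
    · exact ⟨F, subset_rfl, card_le_of_forall_exists_halfspace hr hF, fun _ _ hh => hh⟩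
    push Not at hF
    obtain ⟨a, ha, hredundant⟩ := hF
    obtain ⟨G, hGF, hcard, hG⟩ := ih (F.erase a) (Finset.erase_ssubset ha)
    refine ⟨G, hGF.trans (F.erase_subset a), hcard, fun h hh hGh => ?_⟩
    have herase : ∀ b ∈ F, b ≠ a → b ∈ h :=
      fun b hb hba => hG h hh hGh b (Finset.mem_erase.2 ⟨hba, hb⟩)
    intro b hb
    by_cases hba : b = a
    · subst hba
      by_contra hbh
      obtain ⟨c, hc, hcb, hch⟩ := hredundant h hh hbh
      exact hch (herase c hc hcb)
    · exact herase b hb hba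

theorem exists_meet_eq_of_rankLE {r : ℕ} (hr : RankLE M.med r) (x y : X) (l : List X) :
    ∃ l' ⊆ l, l'.length ≤ r ∧ M.meet x y l' = M.meet x y l := by
  classical
  obtain ⟨G, hGl, hcard, hG⟩ := exists_subset_card_le_of_rankLE hr x y l.toFinset
  have hGl : G.toList ⊆ l := fun a ha => List.mem_toFinset.1 (hGl (Finset.mem_toList.1 ha))
  refine ⟨G.toList, hGl, G.length_toList.trans_le hcard, ?_⟩
  refine eq_of_forall_mem_halfspacesBetween (meet_mem_interval x y _) (meet_mem_interval x y _)
    fun h hh => ?_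
  rw [meet_mem_iff hh, meet_mem_iff hh]
  simp only [Finset.mem_toList, List.mem_toFinset] at hG ⊢
  exact ⟨hG h hh, fun hl a ha => hl a (hGl (Finset.mem_toList.2 ha))⟩

end Meet

section Span

variable {A S : Set X} {p q x y : X}

theorem subset_MSet (M : MedianAlgebra X) (A : Set X) : A ⊆ MSet M.med A :=
  fun a ha => ⟨a, ha, a, ha, a, ha, M.absorb a a⟩

theorem monotone_iterate_MSet (M : MedianAlgebra X) (A : Set X) :
    Monotone fun n => (MSet M.med)^[n] A :=
  fun _ _ hmn => Function.monotone_iterate_of_id_le M.subset_MSet hmn A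

theorem subset_medSpan (M : MedianAlgebra X) (A : Set X) : A ⊆ medSpan M.med A :=
  Set.subset_sInter fun _ hS => hS.1

theorem med_mem_medSpan {a b c : X} (ha : a ∈ medSpan M.med A) (hb : b ∈ medSpan M.med A)
    (hc : c ∈ medSpan M.med A) : M.med a b c ∈ medSpan M.med A :=
  fun S hS => hS.2 a (ha S hS) b (hb S hS) c (hc S hS)

theorem medSpan_mono (M : MedianAlgebra X) (hAS : A ⊆ S) : medSpan M.med A ⊆ medSpan M.med S :=
  Set.sInter_subset_sInter fun _ hT => ⟨hAS.trans hT.1, hT.2⟩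

theorem medSpan_empty (M : MedianAlgebra X) : medSpan M.med ∅ = ∅ :=
  Set.subset_empty_iff.1 (Set.sInter_subset_of_mem ⟨subset_rfl, fun _ ha => ha.elim⟩)

theorem medSpan_induction {P : X → Prop} (mem : ∀ a ∈ A, P a)
    (med : ∀ a b c, P a → P b → P c → P (M.med a b c)) (hp : p ∈ medSpan M.med A) : P p :=
  hp {z | P z} ⟨mem, fun a ha b hb c hc => med a b c ha hb hc⟩

theorem iterate_MSet_subset_medSpan (M : MedianAlgebra X) (A : Set X) (n : ℕ) :
    (MSet M.med)^[n] A ⊆ medSpan M.med A := by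
  induction n with
  | zero => exact M.subset_medSpan A
  | succ n ih =>
    rw [Function.iterate_succ_apply']
    rintro _ ⟨a, ha, b, hb, c, hc, rfl⟩
    exact med_mem_medSpan (ih ha) (ih hb) (ih hc)

theorem meet_mem_iterate_MSet {k : ℕ} {l : List X} (hy : y ∈ S)
    (hstep : ∀ n, ∀ a ∈ l, ∀ e ∈ (MSet M.med)^[n] S, M.med x a e ∈ (MSet M.med)^[n + k] S) :
    M.meet x y l ∈ (MSet M.med)^[k * l.length] S := by
  induction l with
  | nil => exact hy
  | cons a l ih =>
    exact hstep _ a List.mem_cons_self _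
      (ih fun n b hb => hstep n b (List.mem_cons_of_mem a hb))

theorem meet_mem_iterate_MSet_of_rankLE {r : ℕ} (hr : RankLE M.med r) (hx : x ∈ S) (hy : y ∈ S)
    {l : List X} (hl : ∀ a ∈ l, a ∈ S) : M.meet x y l ∈ (MSet M.med)^[r] S := by
  obtain ⟨l', hl', hlength, hmeet⟩ := exists_meet_eq_of_rankLE hr x y l
  rw [← hmeet]
  refine M.monotone_iterate_MSet S (l'.length.one_mul.trans_le hlength)
    (meet_mem_iterate_MSet hy fun n a ha e he => ?_)
  have hSn : S ⊆ (MSet M.med)^[n] S := M.monotone_iterate_MSet S n.zero_le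
  rw [Function.iterate_succ_apply']
  exact ⟨x, hSn hx, a, hSn (hl a (hl' ha)), e, he, rfl⟩

theorem exists_dnf_of_mem_medSpan (hp : p ∈ medSpan M.med A) :
    ∃ T : List (List X), (∀ l ∈ T, ∀ a ∈ l, a ∈ A) ∧
      ∀ h, IsHalfspace M.med h → (p ∈ h ↔ ∃ l ∈ T, ∀ a ∈ l, a ∈ h) := by
  refine medSpan_induction (P := fun p => ∃ T : List (List X), (∀ l ∈ T, ∀ a ∈ l, a ∈ A) ∧
    ∀ h, IsHalfspace M.med h → (p ∈ h ↔ ∃ l ∈ T, ∀ a ∈ l, a ∈ h))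
    (fun a ha => ⟨[[a]], by simpa using ha, by simp⟩) ?_ hp
  rintro a b c ⟨Ta, hTa, ha⟩ ⟨Tb, hTb, hb⟩ ⟨Tc, hTc, hc⟩
  let conj (T U : List (List X)) := T.flatMap fun l => U.map (l ++ ·)
  have forall_mem_conj {T U : List (List X)} (hT : ∀ l ∈ T, ∀ a ∈ l, a ∈ A)
      (hU : ∀ l ∈ U, ∀ a ∈ l, a ∈ A) : ∀ l ∈ conj T U, ∀ a ∈ l, a ∈ A := by
    simp only [conj, List.mem_flatMap, List.mem_map]
    rintro _ ⟨l, hl, m, hm, rfl⟩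
    exact List.forall_mem_append.2 ⟨hT l hl, hU m hm⟩
  have exists_mem_conj (T U : List (List X)) (h : Set X) : (∃ l ∈ conj T U, ∀ a ∈ l, a ∈ h) ↔
      (∃ l ∈ T, ∀ a ∈ l, a ∈ h) ∧ ∃ l ∈ U, ∀ a ∈ l, a ∈ h := by
    simp only [conj, List.mem_flatMap, List.mem_map]
    constructor
    · rintro ⟨_, ⟨l, hl, m, hm, rfl⟩, hlm⟩
      rw [List.forall_mem_append] at hlm
      exact ⟨⟨l, hl, hlm.1⟩, m, hm, hlm.2⟩
    · rintro ⟨⟨l, hl, hlh⟩, m, hm, hmh⟩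
      exact ⟨l ++ m, ⟨l, hl, m, hm, rfl⟩, List.forall_mem_append.2 ⟨hlh, hmh⟩⟩
  refine ⟨conj Ta Tb ++ (conj Tb Tc ++ conj Ta Tc), ?_, fun h hh => ?_⟩
  · simp only [List.forall_mem_append]
    exact ⟨forall_mem_conj hTa hTb, forall_mem_conj hTb hTc, forall_mem_conj hTa hTc⟩
  · simp only [hh.med_mem_iff, ha h hh, hb h hh, hc h hh, List.mem_append, or_and_right,
      exists_or, exists_mem_conj]

theorem exists_eq_meet_map_meet (hq : q ∈ medSpan M.med A) (hqI : q ∈ M.interval x y) :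
    ∃ T : List (List X), (∀ l ∈ T, ∀ a ∈ l, a ∈ A) ∧ q = M.meet y x (T.map (M.meet x y)) := by
  obtain ⟨T, hTA, hT⟩ := exists_dnf_of_mem_medSpan hq
  refine ⟨T, hTA, eq_of_forall_mem_halfspacesBetween hqI
    (mem_interval_symm (meet_mem_interval y x _)) fun h hh => ?_⟩
  rw [hT h hh.1, ← not_iff_not, ← Set.mem_compl_iff,
    meet_mem_iff (compl_mem_halfspacesBetween hh)]
  simp only [List.forall_mem_map, Set.mem_compl_iff, meet_mem_iff hh, not_exists, not_and]

theorem medSpan_inter_interval_subset {r : ℕ} (hr : RankLE M.med r) (hx : x ∈ S) (hy : y ∈ S) :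
    medSpan M.med S ∩ M.interval x y ⊆ (MSet M.med)^[2 * r] S := by
  rintro q ⟨hq, hqI⟩
  obtain ⟨T, hTS, rfl⟩ := exists_eq_meet_map_meet hq hqI
  have hS : S ⊆ (MSet M.med)^[r] S := M.monotone_iterate_MSet S r.zero_le
  rw [two_mul, Function.iterate_add_apply]
  exact meet_mem_iterate_MSet_of_rankLE hr (hS hy) (hS hx)
    (List.forall_mem_map.2 fun l hl => meet_mem_iterate_MSet_of_rankLE hr hx hy (hTS l hl))

theorem exists_list_forall_isHalfspace_of_mem_medSpan (hp : p ∈ medSpan M.med A) :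
    ∃ l : List X, (∀ a ∈ l, a ∈ A) ∧ ∀ h, IsHalfspace M.med h → (∀ a ∈ l, a ∈ h) → p ∈ h := by
  obtain ⟨T, hTA, hT⟩ := exists_dnf_of_mem_medSpan hp
  refine ⟨T.flatten, fun a ha => ?_, fun h hh hTh => ?_⟩
  · obtain ⟨l, hl, hal⟩ := List.mem_flatten.1 ha
    exact hTA l hl a hal
  by_contra hph
  obtain ⟨l, hl, -⟩ := (hT hᶜ hh.compl).1 hph
  exact hph ((hT h hh).2 ⟨l, hl, fun a ha => hTh a (List.mem_flatten_of_mem hl ha)⟩)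

theorem exists_meet_eq_self_of_mem_medSpan (hp : p ∈ medSpan M.med A) (y : X) :
    ∃ l : List X, (∀ a ∈ l, a ∈ A) ∧ M.meet p y l = p := by
  obtain ⟨l, hlA, hl⟩ := exists_list_forall_isHalfspace_of_mem_medSpan hp
  refine ⟨l, hlA, eq_of_forall_mem_halfspacesBetween (meet_mem_interval p y l)
    (left_mem_interval p y) fun h hh => ?_⟩
  rw [meet_mem_iff hh]
  exact ⟨hl h hh.1, fun hph => absurd hph hh.2.1⟩

theorem medSpan_subset_iterate_MSet {r : ℕ} (hr : RankLE M.med r) (A : Set X) :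
    medSpan M.med A ⊆ (MSet M.med)^[2 * r ^ 2] A := by
  intro p hp
  obtain ⟨y, hy⟩ : A.Nonempty := by
    rw [Set.nonempty_iff_ne_empty]
    rintro rfl
    exact (M.medSpan_empty ▸ hp : p ∈ (∅ : Set X))
  obtain ⟨l, hlA, hlp⟩ := exists_meet_eq_self_of_mem_medSpan hp y
  obtain ⟨l', hl', hlength, hmeet⟩ := exists_meet_eq_of_rankLE hr p y l
  have hstep : ∀ n, ∀ a ∈ l', ∀ e ∈ (MSet M.med)^[n] A,
      M.med p a e ∈ (MSet M.med)^[n + 2 * r] A := by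
    intro n a ha e he
    have haA : a ∈ A := hlA a (hl' ha)
    have hAn : A ⊆ (MSet M.med)^[n] A := M.monotone_iterate_MSet A n.zero_le
    have hspan : M.med p a e ∈ medSpan M.med A :=
      med_mem_medSpan hp (M.subset_medSpan A haA) (M.iterate_MSet_subset_medSpan A n he)
    rw [Nat.add_comm, Function.iterate_add_apply]
    exact medSpan_inter_interval_subset hr (hAn haA) he
      ⟨M.medSpan_mono hAn hspan, med_mem_interval_mid_right p a e⟩
  have hbound : 2 * r * l'.length ≤ 2 * r ^ 2 := by
    rw [sq, ← mul_assoc]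
    exact Nat.mul_le_mul_left _ hlength
  have hmem : M.meet p y l' ∈ (MSet M.med)^[2 * r * l'.length] A := meet_mem_iterate_MSet hy hstep
  rw [hmeet, hlp] at hmem
  exact M.monotone_iterate_MSet A hbound hmem

end Span

end MedianAlgebra

theorem le_two_pow_choose_two (r : ℕ) : r ≤ 2 ^ (r * (r - 1) / 2) := by
  have hpred : r - 1 ≤ r * (r - 1) / 2 := by
    rcases r with _ | _ | r
    · simp
    · simp
    · rw [Nat.le_div_iff_mul_le two_pos, mul_comm]
      exact Nat.mul_le_mul_right _ (by lia)
  have hlt : r * (r - 1) / 2 < 2 ^ (r * (r - 1) / 2) := Nat.lt_two_pow_self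
  lia

theorem two_mul_le_two_pow (n : ℕ) : 2 * n ≤ 2 ^ n := by
  rcases n with _ | n
  · simp
  · rw [pow_succ']
    exact Nat.mul_le_mul_left 2 Nat.lt_two_pow_self

theorem two_mul_sq_le_double_exp (r : ℕ) :
    2 * r ^ 2 ≤ r * (1 + 2 ^ 2 ^ (r * (r - 1) / 2)) + r := by
  have hpow : 2 * r ≤ 2 ^ 2 ^ (r * (r - 1) / 2) :=
    (Nat.mul_le_mul_left 2 (le_two_pow_choose_two r)).trans (two_mul_le_two_pow _)
  calc 2 * r ^ 2 = r * (2 * r) := by ring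
    _ ≤ r * 2 ^ 2 ^ (r * (r - 1) / 2) := Nat.mul_le_mul_left r hpow
    _ ≤ r * (1 + 2 ^ 2 ^ (r * (r - 1) / 2)) + r := by lia

theorem stmt9_general {X : Type*} {r n : ℕ} {M : MedianAlgebra X} (hr : RankLE M.med r)
    (hn : 2 * r ^ 2 ≤ n) (A : Set X) :
    medSpan M.med A = (MSet M.med)^[n] A :=
  Set.Subset.antisymm
    ((MedianAlgebra.medSpan_subset_iterate_MSet hr A).trans (M.monotone_iterate_MSet A hn))
    (M.iterate_MSet_subset_medSpan A n)

/-- with `h r = r * g r + r` where `g r = 1 + 2^(2^(r(r-1)/2))`,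
every median algebra of rank at most `r` satisfies `⟨A⟩ = ℳ^[h r](A)` for
every subset `A`. -/
theorem stmt9 {X : Type*} (r : ℕ) (M : MedianAlgebra X) (hr : RankLE M.med r)
    (A : Set X) :
    medSpan M.med A =
      (MSet M.med)^[r * (1 + 2 ^ 2 ^ (r * (r - 1) / 2)) + r] A :=
  stmt9_general hr (two_mul_sq_le_double_exp r) A
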